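/- (Proposition 1.) Let 𝒜, ℬ, 𝒞 be real numbers with 𝒜² − ℬ𝒞 = 1, and let q₀, p₀ be independent standard normal random variables. Define the energy error Δ(q₀,p₀) = (1/2)((𝒜q₀ + ℬp₀)² + (𝒞q₀ + 𝒜p₀)²) − (1/2)(q₀² + p₀²). Then 𝔼(Δ) = (1/2)(ℬ + 𝒞)². -/

import Mathlib

open MeasureTheory ProbabilityTheory

lemma gauss_integrable_sq : Integrable (fun x : ℝ => x ^ 2) (gaussianReal 0 1) := by
  have h : MemLp id 2 (gaussianReal 0 1) := memLp_id_gaussianReal' 2 (by simp)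
  exact h.integrable_sq

lemma gauss_integrable_id : Integrable (fun x : ℝ => x) (gaussianReal 0 1) := by
  have h : MemLp id 1 (gaussianReal 0 1) := memLp_id_gaussianReal' 1 (by simp)
  exact memLp_one_iff_integrable.mp h

lemma gauss_integral_sq : ∫ x : ℝ, x ^ 2 ∂(gaussianReal 0 1) = 1 := by
  have h := variance_fun_id_gaussianReal (μ := 0) (v := 1)
  rw [variance_eq_integral (by fun_prop)] at h
  simpa [integral_id_gaussianReal] using h

/-- Proposition 1: with `𝒜² - ℬ𝒞 = 1` and `q₀, p₀` independent standard normals,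
the expected energy error is `𝔼(Δ) = (1/2)(ℬ + 𝒞)²`. -/
theorem expected_energy_error (A B C : ℝ) (hvol : A ^ 2 - B * C = 1) :
    ∫ x : ℝ × ℝ,
        ((1 / 2) * ((A * x.1 + B * x.2) ^ 2 + (C * x.1 + A * x.2) ^ 2) -
          (1 / 2) * (x.1 ^ 2 + x.2 ^ 2))
        ∂((gaussianReal 0 1).prod (gaussianReal 0 1)) =
      (1 / 2) * (B + C) ^ 2 := by
  have i1 : Integrable (fun x : ℝ × ℝ => x.1 ^ 2)
      ((gaussianReal 0 1).prod (gaussianReal 0 1)) := gauss_integrable_sq.comp_fst _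
  have i2 : Integrable (fun x : ℝ × ℝ => x.2 ^ 2)
      ((gaussianReal 0 1).prod (gaussianReal 0 1)) := gauss_integrable_sq.comp_snd _
  have i3 : Integrable (fun x : ℝ × ℝ => x.1 * x.2)
      ((gaussianReal 0 1).prod (gaussianReal 0 1)) :=
    gauss_integrable_id.mul_prod gauss_integrable_id
  have e1 : ∫ x : ℝ × ℝ, x.1 ^ 2 ∂((gaussianReal 0 1).prod (gaussianReal 0 1)) = 1 := by
    rw [integral_fun_fst (fun x : ℝ => x ^ 2), gauss_integral_sq]; simp
  have e2 : ∫ x : ℝ × ℝ, x.2 ^ 2 ∂((gaussianReal 0 1).prod (gaussianReal 0 1)) = 1 := by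
    rw [integral_fun_snd (fun x : ℝ => x ^ 2), gauss_integral_sq]; simp
  have e3 : ∫ x : ℝ × ℝ, x.1 * x.2 ∂((gaussianReal 0 1).prod (gaussianReal 0 1)) = 0 := by
    rw [integral_prod_mul (fun x : ℝ => x) (fun x : ℝ => x), integral_id_gaussianReal]; simp
  have hf : (fun x : ℝ × ℝ => ((1 / 2) * ((A * x.1 + B * x.2) ^ 2 + (C * x.1 + A * x.2) ^ 2) -
          (1 / 2) * (x.1 ^ 2 + x.2 ^ 2))) = fun x : ℝ × ℝ =>
      ((A ^ 2 + C ^ 2 - 1) / 2) * x.1 ^ 2 + ((A ^ 2 + B ^ 2 - 1) / 2) * x.2 ^ 2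
        + (A * B + A * C) * (x.1 * x.2) := by
    funext x; ring
  have i12 : Integrable (fun x : ℝ × ℝ => ((A ^ 2 + C ^ 2 - 1) / 2) * x.1 ^ 2
      + ((A ^ 2 + B ^ 2 - 1) / 2) * x.2 ^ 2)
      ((gaussianReal 0 1).prod (gaussianReal 0 1)) := (i1.const_mul _).add (i2.const_mul _)
  rw [hf, integral_add i12 (i3.const_mul _),
    integral_add (i1.const_mul _) (i2.const_mul _), integral_const_mul, integral_const_mul,
    integral_const_mul, e1, e2, e3]
  linear_combination hvol
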